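/- arXiv:1601.07113 — 2 statements merged into one kernel-verified Lean document; each statement's English description precedes it below -/
import Mathlib

section
/- Let α > 0, β > 0, t₀ > 0, let Φ : H → ℝ be convex and twice continuously differentiable, and let x : [t₀, ∞) → H be a solution of (DIN-AVD). Then, as t → ∞, each of W₀(t), W_β(t) and Φ(x(t)) converges (in the extended reals ℝ ∪ {−∞}) to inf Φ. -/
open Filter MeasureTheory Set
open scoped Topology RealInnerProductSpace

variable {H : Type*} [NormedAddCommGroup H] [InnerProductSpace ℝ H] [CompleteSpace H]

/-- `x`, together with its first and second derivatives `x'`, `x''`, is a twice continuously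
differentiable solution of (DIN-AVD) on `[t₀, ∞)`:
`ẍ(t) + (α/t) ẋ(t) + β ∇²Φ(x(t)) ẋ(t) + ∇Φ(x(t)) = 0`. -/
def IsDINAVDSolution (α β t₀ : ℝ) (Φ : H → ℝ) (x x' x'' : ℝ → H) : Prop :=
  (∀ t ∈ Set.Ici t₀, HasDerivAt x (x' t) t) ∧
  (∀ t ∈ Set.Ici t₀, HasDerivAt x' (x'' t) t) ∧
  ContinuousOn x'' (Set.Ici t₀) ∧
  ∀ t ∈ Set.Ici t₀,
    x'' t + (α / t) • x' t + β • (fderiv ℝ (gradient Φ) (x t)) (x' t)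
      + gradient Φ (x t) = 0

/-- The energy function `W_θ`. -/
noncomputable def energyW (β θ : ℝ) (Φ : H → ℝ) (x x' : ℝ → H) (t : ℝ) : ℝ :=
  Φ (x t) + (1 / 2) * ‖x' t + θ • gradient Φ (x t)‖ ^ 2
    + (θ * (β - θ) / 2) * ‖gradient Φ (x t)‖ ^ 2

lemma aux_antitone {f f' : ℝ → ℝ} {T : ℝ} (hf : ∀ t ∈ Ici T, HasDerivAt f (f' t) t)
    (hn : ∀ t ∈ Ici T, f' t ≤ 0) : AntitoneOn f (Ici T) := by
  apply antitoneOn_of_deriv_nonpos (convex_Ici T)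
  · exact fun t ht => (hf t ht).continuousAt.continuousWithinAt
  · exact fun t ht => (hf t (interior_subset ht)).differentiableAt.differentiableWithinAt
  · intro t ht
    rw [(hf t (interior_subset ht)).deriv]
    exact hn t (interior_subset ht)

lemma aux_log {f f' : ℝ → ℝ} {T c : ℝ} (hT : 0 < T) (hc : 0 < c)
    (hf : ∀ t ∈ Ici T, HasDerivAt f (f' t) t)
    (hn : ∀ t ∈ Ici T, f' t ≤ -(c / t)) : Tendsto f atTop atBot := by
  have h1 : AntitoneOn (fun t => f t + c * Real.log t) (Ici T) := by
    apply aux_antitone (f' := fun t => f' t + c * t⁻¹)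
    · intro t ht
      have : t ≠ 0 := (lt_of_lt_of_le hT ht).ne'
      exact (hf t ht).add ((Real.hasDerivAt_log this).const_mul c)
    · intro t ht
      have := hn t ht
      rw [div_eq_mul_inv] at this
      linarith
  have h2 : Tendsto (fun t => (f T + c * Real.log T) - c * Real.log t) atTop atBot := by
    have h3 := (Real.tendsto_log_atTop.const_mul_atTop hc)
    have h4 := tendsto_atBot_add_const_left atTop (f T + c * Real.log T)
      (tendsto_neg_atTop_atBot.comp h3)
    refine h4.congr fun t => ?_
    simp [sub_eq_add_neg]
  refine tendsto_atBot_mono' _ ?_ h2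
  filter_upwards [eventually_ge_atTop T] with t ht
  have := h1 (mem_Ici.2 le_rfl) (mem_Ici.2 ht) ht
  dsimp only at this
  linarith

lemma aux_ereal {Φ : H → ℝ} {x : ℝ → H} {f : ℝ → ℝ} (h1 : ∀ t, Φ (x t) ≤ f t)
    (h2 : ∀ z r, Φ z < r → ∀ᶠ t in atTop, f t < r) :
    Tendsto (fun t => (f t : EReal)) atTop (𝓝 (⨅ z : H, (Φ z : EReal))) := by
  rw [tendsto_order]
  constructor
  · intro a ha
    refine Eventually.of_forall fun t => lt_of_lt_of_le ha ?_
    exact (iInf_le _ (x t)).trans (EReal.coe_le_coe_iff.2 (h1 t))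
  · intro a ha
    obtain ⟨z, hz⟩ := iInf_lt_iff.1 ha
    obtain ⟨r, hr1, hr2⟩ := EReal.lt_iff_exists_real_btwn.1 hz
    filter_upwards [h2 z r (EReal.coe_lt_coe_iff.1 hr1)] with t ht
    exact (EReal.coe_lt_coe_iff.2 ht).trans hr2

lemma aux_hasDeriv_line {Φ : H → ℝ} (hd : Differentiable ℝ Φ) (y v : H) (s : ℝ) :
    HasDerivAt (fun s : ℝ => Φ (y + s • v)) ⟪gradient Φ (y + s • v), v⟫ s := by
  have h1 := (hd (y + s • v)).hasGradientAt.hasFDerivAt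
  have h2 : HasDerivAt (fun s : ℝ => y + s • v) v s := by
    simpa using ((hasDerivAt_id s).smul_const v).const_add y
  exact (h1.comp_hasDerivAt s h2).congr_deriv (InnerProductSpace.toDual_apply_apply ..)

lemma aux_grad_ineq {Φ : H → ℝ} (hd : Differentiable ℝ Φ) (hconv : ConvexOn ℝ univ Φ) (y z : H) :
    Φ y + ⟪gradient Φ y, z - y⟫ ≤ Φ z := by
  have hc : ConvexOn ℝ univ (fun s : ℝ => Φ (y + s • (z - y))) := by
    have := hconv.comp_affineMap (AffineMap.lineMap y z : ℝ →ᵃ[ℝ] H)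
    refine (show (fun s : ℝ => Φ (y + s • (z - y))) = Φ ∘ (AffineMap.lineMap y z : ℝ →ᵃ[ℝ] H) from ?_) ▸ this
    funext s
    simp [AffineMap.lineMap_apply, add_comm]
  have h := hc.le_slope_of_hasDerivAt (mem_univ (0:ℝ)) (mem_univ 1) one_pos
    (aux_hasDeriv_line hd y (z - y) 0)
  rw [slope_def_field] at h
  simp only [zero_smul, add_zero, one_smul, add_sub_cancel, sub_zero, div_one] at h
  linarith

lemma aux_hess {Φ : H → ℝ} (hΦ : ContDiff ℝ 2 Φ) : Differentiable ℝ (gradient Φ) := by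
  have h1 : ContDiff ℝ 1 (fderiv ℝ Φ) := hΦ.fderiv_right (by norm_num)
  have h2 := h1.differentiable (by norm_num)
  exact fun y => ((InnerProductSpace.toDual ℝ H).symm.toContinuousLinearEquiv.differentiableAt).comp y (h2 y)

lemma aux_hess_nonneg {Φ : H → ℝ} (hΦ : ContDiff ℝ 2 Φ) (hconv : ConvexOn ℝ univ Φ) (y v : H) :
    0 ≤ ⟪v, fderiv ℝ (gradient Φ) y v⟫ := by
  have hd : Differentiable ℝ Φ := hΦ.differentiable (by norm_num)
  have hg := aux_hess hΦ
  have h2 : HasDerivAt (fun s : ℝ => y + s • v) v 0 := by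
    simpa using ((hasDerivAt_id (0:ℝ)).smul_const v).const_add y
  have h3 : HasDerivAt (fun s : ℝ => gradient Φ (y + s • v)) (fderiv ℝ (gradient Φ) y v) 0 := by
    have := (hg (y + (0:ℝ) • v)).hasFDerivAt.comp_hasDerivAt (0:ℝ) h2
    exact this.congr_deriv (by simp)
  have h4 : HasDerivAt (fun s : ℝ => ⟪v, gradient Φ (y + s • v)⟫) ⟪v, fderiv ℝ (gradient Φ) y v⟫ 0 := by
    simpa using (hasDerivAt_const (0:ℝ) v).inner ℝ h3
  have hm : Monotone (fun s : ℝ => ⟪v, gradient Φ (y + s • v)⟫) := by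
    intro s s' hs
    rcases hs.eq_or_lt with rfl | hs
    · exact le_rfl
    have a1 := aux_grad_ineq hd hconv (y + s • v) (y + s' • v)
    have a2 := aux_grad_ineq hd hconv (y + s' • v) (y + s • v)
    have e1 : (y + s' • v) - (y + s • v) = (s' - s) • v := by module
    have e2 : (y + s • v) - (y + s' • v) = (s - s') • v := by module
    rw [e1, inner_smul_right] at a1
    rw [e2, inner_smul_right] at a2
    dsimp only
    rw [real_inner_comm, real_inner_comm _ v]
    have : (s' - s) * ⟪gradient Φ (y + s • v), v⟫ ≤ (s' - s) * ⟪gradient Φ (y + s' • v), v⟫ := by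
      linarith
    exact le_of_mul_le_mul_left this (by linarith)
  rw [← h4.deriv]
  exact hm.deriv_nonneg

theorem stmt1 (α β t₀ : ℝ) (hα : 0 < α) (hβ : 0 < β) (ht₀ : 0 < t₀)
    (Φ : H → ℝ) (hconv : ConvexOn ℝ Set.univ Φ) (hΦ : ContDiff ℝ 2 Φ)
    (x x' x'' : ℝ → H) (hsol : IsDINAVDSolution α β t₀ Φ x x' x'') :
    Tendsto (fun t => (energyW β 0 Φ x x' t : EReal)) atTop (𝓝 (⨅ z : H, (Φ z : EReal))) ∧
    Tendsto (fun t => (energyW β β Φ x x' t : EReal)) atTop (𝓝 (⨅ z : H, (Φ z : EReal))) ∧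
    Tendsto (fun t => (Φ (x t) : EReal)) atTop (𝓝 (⨅ z : H, (Φ z : EReal))) := by
  obtain ⟨hx, hx', -, heq⟩ := hsol
  have hd : Differentiable ℝ Φ := hΦ.differentiable (by norm_num)
  set g : ℝ → H := fun t => gradient Φ (x t) with hg
  set G : ℝ → H := fun t => fderiv ℝ (gradient Φ) (x t) (x' t) with hG
  have hgd : ∀ t ∈ Ici t₀, HasDerivAt g (G t) t := fun t ht =>
    (aux_hess hΦ (x t)).hasFDerivAt.comp_hasDerivAt t (hx t ht)
  have hΦd : ∀ t ∈ Ici t₀, HasDerivAt (fun t => Φ (x t)) ⟪g t, x' t⟫ t := fun t ht => by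
    exact ((hd (x t)).hasGradientAt.hasFDerivAt.comp_hasDerivAt t (hx t ht)).congr_deriv
      (InnerProductSpace.toDual_apply_apply ..)
  have hx2 : ∀ t ∈ Ici t₀, x'' t = -((α / t) • x' t) - β • G t - g t := fun t ht => by
    have := heq t ht
    rw [← sub_eq_zero, ← this]
    simp only [hg, hG]
    module
  have hpos : ∀ t, 0 ≤ ⟪x' t, G t⟫ := fun t => aux_hess_nonneg hΦ hconv _ _
  have hW0e : ∀ t, energyW β 0 Φ x x' t = Φ (x t) + 1 / 2 * ‖x' t‖ ^ 2 := fun t => by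
    simp [energyW]
  have hWβe : ∀ t, energyW β β Φ x x' t = Φ (x t) + 1 / 2 * ‖x' t + β • g t‖ ^ 2 := fun t => by
    simp [energyW, hg]
  -- derivative of the two energies
  have hW0d : ∀ t ∈ Ici t₀, HasDerivAt (energyW β 0 Φ x x')
      (-(α / t) * ‖x' t‖ ^ 2 - β * ⟪x' t, G t⟫) t := fun t ht => by
    rw [funext hW0e]
    have h := (hΦd t ht).add (((hx' t ht).norm_sq).const_mul (1 / 2))
    refine HasDerivAt.congr_deriv h ?_
    rw [hx2 t ht]
    simp only [inner_sub_right, inner_neg_right, inner_smul_right, real_inner_self_eq_norm_sq]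
    rw [real_inner_comm (g t) (x' t)]
    ring
  have hWβd : ∀ t ∈ Ici t₀, HasDerivAt (energyW β β Φ x x')
      (-(α / t) * ‖x' t‖ ^ 2 - β * (α / t) * ⟪g t, x' t⟫ - β * ‖g t‖ ^ 2) t := fun t ht => by
    rw [funext hWβe]
    have h := (hΦd t ht).add ((((hx' t ht).add ((hgd t ht).const_smul β)).norm_sq).const_mul (1 / 2))
    refine HasDerivAt.congr_deriv h ?_
    have : x'' t + β • G t = -((α / t) • x' t) - g t := by rw [hx2 t ht]; module
    rw [this]
    simp only [inner_sub_right, inner_neg_right, inner_smul_right, inner_add_left,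
      inner_smul_left, real_inner_self_eq_norm_sq, Pi.add_apply, Pi.smul_apply]
    rw [real_inner_comm (g t) (x' t)]
    simp
    ring
  have hW0anti : AntitoneOn (energyW β 0 Φ x x') (Ici t₀) := by
    refine aux_antitone hW0d fun t ht => ?_
    have h0 : 0 < t := lt_of_lt_of_le ht₀ ht
    have h1 : 0 ≤ α / t * ‖x' t‖ ^ 2 := by positivity
    have h2 := mul_nonneg hβ.le (hpos t)
    linarith
  -- main step
  have key : ∀ z r, Φ z < r → ∀ᶠ t in atTop, energyW β 0 Φ x x' t < r := by
    intro z r hr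
    by_cases hex : ∃ t ∈ Ici t₀, energyW β 0 Φ x x' t < r
    · obtain ⟨t, ht, htr⟩ := hex
      filter_upwards [eventually_ge_atTop t] with s hs
      exact (hW0anti ht (le_trans ht hs) hs).trans_lt htr
    exfalso
    push Not at hex
    set h : ℝ → ℝ := fun t => 1 / 2 * ‖x t - z‖ ^ 2 with hh
    set k : ℝ → ℝ := fun t => ⟪x t - z, x' t⟫ with hk
    set u : ℝ → ℝ := fun t => ⟪x t - z, g t⟫ - Φ (x t) with hu
    have hhd : ∀ t ∈ Ici t₀, HasDerivAt h (k t) t := fun t ht => by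
      have := (((hx t ht).sub_const z).norm_sq).const_mul (1 / 2)
      refine HasDerivAt.congr_deriv this ?_
      simp only [hk]; ring
    have hkd : ∀ t ∈ Ici t₀, HasDerivAt k (⟪x t - z, x'' t⟫ + ‖x' t‖ ^ 2) t := fun t ht => by
      have := ((hx t ht).sub_const z).inner ℝ (hx' t ht)
      rwa [real_inner_self_eq_norm_sq] at this
    have hud : ∀ t ∈ Ici t₀, HasDerivAt u ⟪x t - z, G t⟫ t := fun t ht => by
      have := (((hx t ht).sub_const z).inner ℝ (hgd t ht)).sub (hΦd t ht)
      refine HasDerivAt.congr_deriv this ?_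
      rw [real_inner_comm (g t) (x' t)]; ring
    have hub : ∀ t, -Φ z ≤ u t := fun t => by
      have := aux_grad_ineq hd hconv (x t) z
      rw [← neg_sub (x t) z, inner_neg_right, real_inner_comm] at this
      simp only [hu, hg]
      linarith
    have hh0 : ∀ t, 0 ≤ h t := fun t => by simp only [hh]; positivity
    set E : ℝ → ℝ := fun t => k t / t + (1 + α) * (h t / t ^ 2) + β * ((u t + Φ z) / t)
      + 3 / (2 * α) * energyW β 0 Φ x x' t with hE
    have hEd : Tendsto E atTop atBot := by
      refine aux_log ht₀ (sub_pos.2 hr) (f' := fun t =>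
        ((⟪x t - z, x'' t⟫ + ‖x' t‖ ^ 2) * t - k t * 1) / t ^ 2
        + (1 + α) * ((k t * t ^ 2 - h t * (2 * t)) / (t ^ 2) ^ 2)
        + β * ((⟪x t - z, G t⟫ * t - (u t + Φ z) * 1) / t ^ 2)
        + 3 / (2 * α) * (-(α / t) * ‖x' t‖ ^ 2 - β * ⟪x' t, G t⟫)) ?_ ?_
      · intro t ht
        have h0 : 0 < t := lt_of_lt_of_le ht₀ ht
        have hsq : HasDerivAt (fun t : ℝ => t ^ 2) (2 * t) t := by
          simpa using hasDerivAt_pow 2 t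
        exact ((((hkd t ht).div (hasDerivAt_id t) h0.ne').add
          (((hhd t ht).div hsq (by positivity)).const_mul (1 + α))).add
          ((((hud t ht).add_const (Φ z)).div (hasDerivAt_id t) h0.ne').const_mul β)).add
          ((hW0d t ht).const_mul _)
      · intro t ht
        have h0 : 0 < t := lt_of_lt_of_le ht₀ ht
        have e1 : ⟪x t - z, x'' t⟫ = -(α / t) * k t - β * ⟪x t - z, G t⟫ - (u t + Φ (x t)) := by
          rw [hx2 t ht]
          simp only [inner_sub_right, inner_neg_right, inner_smul_right, hu, hk]
          ring
        have e2 := hex t ht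
        rw [hW0e] at e2
        have e3 := hub t
        have e4 := mul_nonneg hβ.le (hpos t)
        have e5 := hh0 t
        rw [e1]
        have e6 : ((-(α / t) * k t - β * ⟪x t - z, G t⟫ - (u t + Φ (x t)) + ‖x' t‖ ^ 2) * t - k t * 1) / t ^ 2
        + (1 + α) * ((k t * t ^ 2 - h t * (2 * t)) / (t ^ 2) ^ 2)
        + β * ((⟪x t - z, G t⟫ * t - (u t + Φ z) * 1) / t ^ 2)
        + 3 / (2 * α) * (-(α / t) * ‖x' t‖ ^ 2 - β * ⟪x' t, G t⟫)
          = -((r - Φ z) / t) - ((Φ (x t) + 1 / 2 * ‖x' t‖ ^ 2 - r) / t + (u t + Φ z) / t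
            + (1 + α) * (2 * h t) / t ^ 3 + β * (u t + Φ z) / t ^ 2
            + 3 / (2 * α) * (β * ⟪x' t, G t⟫)) := by
          field_simp
          ring
        rw [e6]
        have p1 : 0 ≤ (Φ (x t) + 1 / 2 * ‖x' t‖ ^ 2 - r) / t := div_nonneg (by linarith) h0.le
        have p2 : 0 ≤ (u t + Φ z) / t := div_nonneg (by linarith) h0.le
        have p3 : 0 ≤ (1 + α) * (2 * h t) / t ^ 3 := by positivity
        have p4 : 0 ≤ β * (u t + Φ z) / t ^ 2 :=
          div_nonneg (mul_nonneg hβ.le (by linarith)) (by positivity)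
        have p5 : 0 ≤ 3 / (2 * α) * (β * ⟪x' t, G t⟫) := mul_nonneg (by positivity) e4
        linarith
    obtain ⟨T, hT⟩ := eventually_atTop.1
      ((hEd.eventually_le_atBot (3 / (2 * α) * r - 1)).and (eventually_ge_atTop (max t₀ 1)))
    have hT1 : max t₀ 1 ≤ T := (hT T le_rfl).2
    have hbot : Tendsto h atTop atBot := by
      refine aux_log (T := T) (c := 1) (by linarith [le_max_right t₀ 1]) one_pos (f' := k)
        (fun t ht => hhd t (le_trans (le_trans (le_max_left _ _) hT1) ht)) ?_
      intro t ht
      have ht0 : t ∈ Ici t₀ := le_trans (le_trans (le_max_left _ _) hT1) ht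
      have ht1 : 1 ≤ t := le_trans (le_trans (le_max_right _ _) hT1) ht
      have h0 : 0 < t := by linarith
      have q := (hT t ht).1
      have p1 : 0 ≤ (1 + α) * (h t / t ^ 2) := by have := hh0 t; positivity
      have p2 : 0 ≤ β * ((u t + Φ z) / t) :=
        mul_nonneg hβ.le (div_nonneg (by linarith [hub t]) h0.le)
      have p3 : 3 / (2 * α) * r ≤ 3 / (2 * α) * energyW β 0 Φ x x' t :=
        mul_le_mul_of_nonneg_left (hex t ht0) (by positivity)
      simp only [hE] at q
      have q2 : k t / t ≤ -1 := by linarith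
      rw [div_le_iff₀ h0] at q2
      have : 1 / t ≤ 1 := by rw [div_le_one h0]; exact ht1
      linarith
    obtain ⟨t, ht⟩ := (hbot.eventually_lt_atBot 0).exists
    linarith [hh0 t]
  have hΦle0 : ∀ t, Φ (x t) ≤ energyW β 0 Φ x x' t := fun t => by
    rw [hW0e]; nlinarith [sq_nonneg ‖x' t‖]
  have hΦleβ : ∀ t, Φ (x t) ≤ energyW β β Φ x x' t := fun t => by
    rw [hWβe]; nlinarith [sq_nonneg ‖x' t + β • g t‖]
  have keyΦ : ∀ z r, Φ z < r → ∀ᶠ t in atTop, Φ (x t) < r := fun z r hr => by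
    filter_upwards [key z r hr] with t ht
    exact (hΦle0 t).trans_lt ht
  refine ⟨aux_ereal hΦle0 key, aux_ereal hΦleβ ?_, aux_ereal (fun _ => le_rfl) keyΦ⟩
  have hbd : ∀ t, t₀ ≤ t → α * β ≤ t →
      -(α / t) * ‖x' t‖ ^ 2 - β * (α / t) * ⟪g t, x' t⟫ - β * ‖g t‖ ^ 2
        ≤ -(α / t) * (1 / 2 * ‖x' t + β • g t‖ ^ 2) := by
    intro t ht htab
    have h0 : 0 < t := lt_of_lt_of_le ht₀ ht
    have e : ‖x' t + β • g t‖ ^ 2 = ‖x' t‖ ^ 2 + 2 * β * ⟪g t, x' t⟫ + β ^ 2 * ‖g t‖ ^ 2 := by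
      rw [norm_add_sq_real, inner_smul_right, norm_smul, real_inner_comm, Real.norm_eq_abs,
        mul_pow, sq_abs]
      ring
    rw [e]
    have e1 : α / t * β ≤ 1 := by
      rw [div_mul_eq_mul_div, div_le_one h0]; exact htab
    have e2 : 0 ≤ α / t := by positivity
    have e3 : α / t * β * (β * ‖g t‖ ^ 2) ≤ 1 * (β * ‖g t‖ ^ 2) :=
      mul_le_mul_of_nonneg_right e1 (by positivity)
    have e4 : 0 ≤ α / t * ‖x' t‖ ^ 2 := by positivity
    have e5 : 0 ≤ β * ‖g t‖ ^ 2 := by positivity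
    linarith
  intro z r hr
  obtain ⟨T, hT⟩ := eventually_atTop.1 (((keyΦ z ((Φ z + r) / 2) (by linarith)).and
    (eventually_ge_atTop t₀)).and (eventually_ge_atTop (α * β)))
  have hT0 : 0 < T := lt_of_lt_of_le ht₀ (hT T le_rfl).1.2
  have hd' : ∀ t ∈ Ici T, _ := fun t ht => hWβd t (hT t ht).1.2
  by_cases hex : ∃ t ∈ Ici T, energyW β β Φ x x' t < r
  · obtain ⟨t, ht, htr⟩ := hex
    have hanti := aux_antitone hd' fun t ht => by
      refine (hbd t (hT t ht).1.2 (hT t ht).2).trans ?_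
      have h0 : 0 < t := lt_of_lt_of_le hT0 ht
      have : 0 ≤ (α / t) * (1 / 2 * ‖x' t + β • g t‖ ^ 2) := by positivity
      linarith
    filter_upwards [eventually_ge_atTop t] with s hs
    exact (hanti ht (le_trans ht hs) hs).trans_lt htr
  exfalso
  push Not at hex
  have hbot := aux_log (c := α * ((r - Φ z) / 2)) hT0 (by have := sub_pos.2 hr; positivity) hd' (by
    intro t ht
    refine (hbd t (hT t ht).1.2 (hT t ht).2).trans ?_
    have h0 : 0 < t := lt_of_lt_of_le hT0 ht
    have a1 := hex t ht
    rw [hWβe] at a1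
    have a2 := (hT t ht).1.1
    have a3 : α / t * ((r - Φ z) / 2) ≤ α / t * (1 / 2 * ‖x' t + β • g t‖ ^ 2) :=
      mul_le_mul_of_nonneg_left (by linarith) (by positivity)
    rw [mul_div_right_comm]
    linarith)
  obtain ⟨t, ht, ht'⟩ := ((hbot.eventually_lt_atBot r).and (eventually_ge_atTop T)).exists
  linarith [hex t ht']
end

section
/- Let α ≥ 3, β > 0, t₀ > 0, let Φ : H → ℝ be convex and twice continuously differentiable with x* ∈ argmin Φ, and let x : [t₀, ∞) → H be a solution of (DIN-AVD). Then the trajectory x is bounded, and for every λ ∈ [2, α−1] and all t, s with t ≥ s > max{t₀, β}, one has Φ(x(t)) − min Φ ≤ (1/t²)(s/(s−β))^{α−2} 𝓔_λ(s). In particular there is a constant C such that Φ(x(t)) − min Φ ≤ C/t² for all large t. -/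
open Filter MeasureTheory Set
open scoped Topology RealInnerProductSpace

variable {H : Type*} [NormedAddCommGroup H] [InnerProductSpace ℝ H] [CompleteSpace H]

/-- The energy function `𝓔_λ`. -/
noncomputable def energyE (α β lam : ℝ) (Φ : H → ℝ) (xstar : H) (x x' : ℝ → H) (t : ℝ) : ℝ :=
  t * (t - β * (lam + 2 - α)) * (Φ (x t) - Φ xstar)
    + (1 / 2) * ‖lam • (x t - xstar) + t • (x' t + β • gradient Φ (x t))‖ ^ 2
    + lam * (α - lam - 1) / 2 * ‖x t - xstar‖ ^ 2


lemma aux_anti (f f' : ℝ → ℝ) (s : ℝ) (hf : ∀ t, s ≤ t → HasDerivAt f (f' t) t)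
    (hn : ∀ t, s ≤ t → f' t ≤ 0) (t : ℝ) (ht : s ≤ t) : f t ≤ f s := by
  have h : AntitoneOn f (Set.Ici s) := by
    apply antitoneOn_of_deriv_nonpos (convex_Ici s)
    · intro u hu
      exact (hf u hu).continuousAt.continuousWithinAt
    · intro u hu
      rw [interior_Ici] at hu
      exact (hf u (le_of_lt hu)).differentiableAt.differentiableWithinAt
    · intro u hu
      rw [interior_Ici] at hu
      rw [(hf u (le_of_lt hu)).deriv]
      exact hn u (le_of_lt hu)
  exact h (Set.self_mem_Ici) ht ht

lemma aux_conv (Φ : H → ℝ) (hconv : ConvexOn ℝ Set.univ Φ) (hΦ : Differentiable ℝ Φ) (y z : H) :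
    Φ y - Φ z ≤ ⟪gradient Φ y, y - z⟫ := by
  have hline : ConvexOn ℝ Set.univ (fun r : ℝ => Φ (y + r • (z - y))) := by
    refine ⟨convex_univ, ?_⟩
    intro a _ b _ p q hp hq hpq
    have := hconv.2 (Set.mem_univ (y + a • (z - y))) (Set.mem_univ (y + b • (z - y))) hp hq hpq
    refine le_trans (le_of_eq ?_) this
    simp only []
    congr 1
    obtain rfl : p = 1 - q := by linarith
    simp only [smul_eq_mul]
    module
  have hd : HasDerivAt (fun r : ℝ => Φ (y + r • (z - y))) (fderiv ℝ Φ y (z - y)) 0 := by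
    have h1 : HasDerivAt (fun r : ℝ => y + r • (z - y)) (z - y) 0 := by
      simpa using ((hasDerivAt_id (0:ℝ)).smul_const (z - y)).const_add y
    have h2 : HasFDerivAt Φ (fderiv ℝ Φ y) (y + (0:ℝ) • (z - y)) := by
      simpa using (hΦ y).hasFDerivAt
    exact h2.comp_hasDerivAt (0:ℝ) h1
  have := hline.le_slope_of_hasDerivAt (Set.mem_univ 0) (Set.mem_univ 1) one_pos hd
  rw [slope_def_field] at this
  simp at this
  rw [inner_gradient_left]
  have e : y - z = -(z - y) := by abel
  rw [e, map_neg, map_sub]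
  linarith

lemma aux_grad (Φ : H → ℝ) (hΦ : ContDiff ℝ 2 Φ) : Differentiable ℝ (gradient Φ) := by
  have h1 : ContDiff ℝ 1 (fderiv ℝ Φ) := hΦ.fderiv_right (by norm_num)
  have h2 : Differentiable ℝ (fderiv ℝ Φ) := h1.differentiable (by norm_num)
  intro y
  exact ((InnerProductSpace.toDual ℝ H).symm.toContinuousLinearEquiv.differentiableAt).comp y (h2 y)

/-- derivative of the energy -/
lemma aux_energy (α β t₀ : ℝ) (ht₀ : 0 < t₀)
    (Φ : H → ℝ) (hΦ : ContDiff ℝ 2 Φ)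
    (xstar : H) (x x' x'' : ℝ → H) (hsol : IsDINAVDSolution α β t₀ Φ x x' x'')
    (lam t : ℝ) (ht : t₀ ≤ t) :
    HasDerivAt (energyE α β lam Φ xstar x x')
      ((2 * t - β * (lam + 2 - α)) * (Φ (x t) - Φ xstar)
        - lam * (t - β) * ⟪gradient Φ (x t), x t - xstar⟫
        - t * (α - lam - 1) * ‖x' t‖ ^ 2
        - t * β * (t - β) * ‖gradient Φ (x t)‖ ^ 2) t := by
  obtain ⟨hx, hx', -, heq⟩ := hsol
  have htpos : 0 < t := lt_of_lt_of_le ht₀ ht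
  have hxt := hx t ht
  have hxt' := hx' t ht
  have heqt := heq t ht
  have hid := hasDerivAt_id t
  have hg : HasDerivAt (fun u => gradient Φ (x u)) ((fderiv ℝ (gradient Φ) (x t)) (x' t)) t :=
    ((aux_grad Φ hΦ) (x t)).hasFDerivAt.comp_hasDerivAt t hxt
  have hP : HasDerivAt (fun u => Φ (x u)) ⟪gradient Φ (x t), x' t⟫ t := by
    rw [inner_gradient_left]
    exact ((hΦ.differentiable (by norm_num)) (x t)).hasFDerivAt.comp_hasDerivAt t hxt
  have hy : HasDerivAt (fun u => x u - xstar) (x' t) t := hxt.sub_const xstar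
  have hv : HasDerivAt (fun u => lam • (x u - xstar) + u • (x' u + β • gradient Φ (x u)))
      ((lam + 1 - α) • x' t + (β - t) • gradient Φ (x t)) t := by
    have h := (hy.const_smul lam).add (hid.smul (hxt'.add (hg.const_smul β)))
    refine h.congr_deriv ?_
    have e : x'' t = -((α / t) • x' t + β • (fderiv ℝ (gradient Φ) (x t)) (x' t)
        + gradient Φ (x t)) := by
      rw [eq_neg_iff_add_eq_zero, ← heqt]; abel
    simp only [e, id, Pi.add_apply, Pi.smul_apply]
    match_scalars <;> field_simp <;> ring
  have hδ : HasDerivAt (fun u : ℝ => u * (u - β * (lam + 2 - α)))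
      (1 * (t - β * (lam + 2 - α)) + t * 1) t := hid.mul (hid.sub_const _)
  have h := ((hδ.mul (hP.sub_const (Φ xstar))).add (hv.norm_sq.const_mul (1 / 2))).add
    (hy.norm_sq.const_mul (lam * (α - lam - 1) / 2))
  refine h.congr_deriv ?_
  simp only [inner_add_left, inner_add_right, inner_smul_left, inner_smul_right,
    real_inner_self_eq_norm_sq, real_inner_comm (x t - xstar) (gradient Φ (x t)),
    real_inner_comm (x' t) (gradient Φ (x t)), RCLike.conj_to_real]
  ring

lemma aux_decay (α β t₀ : ℝ) (hα : 3 ≤ α) (hβ : 0 < β) (ht₀ : 0 < t₀)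
    (Φ : H → ℝ) (hconv : ConvexOn ℝ Set.univ Φ) (hΦ : ContDiff ℝ 2 Φ)
    (xstar : H) (hmin : ∀ z, Φ xstar ≤ Φ z)
    (x x' x'' : ℝ → H) (hsol : IsDINAVDSolution α β t₀ Φ x x' x'')
    (lam : ℝ) (hl : lam ∈ Set.Icc 2 (α - 1)) (s t : ℝ) (hs : max t₀ β < s) (hst : s ≤ t) :
    (t / (t - β)) ^ (α - 2) * energyE α β lam Φ xstar x x' t ≤
      (s / (s - β)) ^ (α - 2) * energyE α β lam Φ xstar x x' s := by
  obtain ⟨hs1, hs2⟩ := max_lt_iff.1 hs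
  obtain ⟨hl1, hl2⟩ := hl
  refine aux_anti (fun t => (t / (t - β)) ^ (α - 2) * energyE α β lam Φ xstar x x' t) _ s
    (fun u hu => HasDerivAt.mul (HasDerivAt.rpow_const (f := fun t => t / (t - β))
      (f' := (1 * (u - β) - u * 1) / (u - β) ^ 2) ?_ ?_)
      (aux_energy α β t₀ ht₀ Φ hΦ xstar x x' x'' hsol lam u (by linarith))) ?_ t hst
  · exact (hasDerivAt_id u).div ((hasDerivAt_id u).sub_const β) (by linarith)
  · left
    have : 0 < u := by linarith
    have : 0 < u - β := by linarith
    positivity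
  · intro u hu
    have hu0 : 0 < u := by linarith
    have hub : 0 < u - β := by linarith
    have hb : 0 < u / (u - β) := by positivity
    have hw : 0 < (u / (u - β)) ^ (α - 2) := Real.rpow_pos_of_pos hb _
    have hG : 0 ≤ Φ (x u) - Φ xstar := by linarith [hmin (x u)]
    have hc := aux_conv Φ hconv (hΦ.differentiable (by norm_num)) (x u) xstar
    have hpow : (u / (u - β)) ^ (α - 2 - 1) = (u / (u - β)) ^ (α - 2) * ((u - β) / u) := by
      rw [Real.rpow_sub_one hb.ne']
      field_simp
    simp only [hpow]
    have hE : u * (u - β) * (Φ (x u) - Φ xstar) ≤ energyE α β lam Φ xstar x x' u := by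
      unfold energyE
      have h1 : 0 ≤ lam * (α - lam - 1) / 2 * ‖x u - xstar‖ ^ 2 := by
        have : 0 ≤ α - lam - 1 := by linarith
        have : 0 ≤ lam := by linarith
        positivity
      have h2 : 0 ≤ (1 / 2) * ‖lam • (x u - xstar) + u • (x' u + β • gradient Φ (x u))‖ ^ 2 := by
        positivity
      have h3 : u * (u - β) * (Φ (x u) - Φ xstar)
          ≤ u * (u - β * (lam + 2 - α)) * (Φ (x u) - Φ xstar) := by
        apply mul_le_mul_of_nonneg_right _ hG
        apply mul_le_mul_of_nonneg_left _ hu0.le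
        nlinarith
      linarith
    generalize energyE α β lam Φ xstar x x' u = E at *
    generalize (u / (u - β)) ^ (α - 2) = w at *
    generalize Φ (x u) - Φ xstar = G at *
    generalize ⟪gradient Φ (x u), x u - xstar⟫ = I at *
    have hD : (2 * u - β * (lam + 2 - α)) * G - lam * (u - β) * I
        - u * (α - lam - 1) * ‖x' u‖ ^ 2 - u * β * (u - β) * ‖gradient Φ (x u)‖ ^ 2
        ≤ β * (α - 2) * G := by
      have h1 : 0 ≤ u * (α - lam - 1) * ‖x' u‖ ^ 2 := by
        have : 0 ≤ α - lam - 1 := by linarith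
        positivity
      have h2 : 0 ≤ u * β * (u - β) * ‖gradient Φ (x u)‖ ^ 2 := by positivity
      have h3 : lam * (u - β) * G ≤ lam * (u - β) * I :=
        mul_le_mul_of_nonneg_left hc (mul_nonneg (by linarith) hub.le)
      have h4 : 0 ≤ (lam - 2) * u * G :=
        mul_nonneg (mul_nonneg (by linarith) hu0.le) hG
      nlinarith
    generalize (2 * u - β * (lam + 2 - α)) * G - lam * (u - β) * I
        - u * (α - lam - 1) * ‖x' u‖ ^ 2 - u * β * (u - β) * ‖gradient Φ (x u)‖ ^ 2 = D at *
    have e : (1 * (u - β) - u * 1) / (u - β) ^ 2 * (α - 2) * (w * ((u - β) / u)) * E + w * D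
        = w / (u * (u - β)) * (u * (u - β) * D - β * (α - 2) * E) := by
      field_simp
      ring
    rw [e]
    apply mul_nonpos_of_nonneg_of_nonpos
    · positivity
    · have h5 : u * (u - β) * D ≤ u * (u - β) * (β * (α - 2) * G) :=
        mul_le_mul_of_nonneg_left hD (by positivity)
      have h6 : β * (α - 2) * (u * (u - β) * G) ≤ β * (α - 2) * E :=
        mul_le_mul_of_nonneg_left hE (mul_nonneg hβ.le (by linarith))
      linarith

lemma aux_lower (α β : ℝ) (hβ : 0 < β)
    (Φ : H → ℝ) (xstar : H) (hmin : ∀ z, Φ xstar ≤ Φ z)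
    (x x' : ℝ → H)
    (lam : ℝ) (hl : lam ∈ Set.Icc 2 (α - 1)) (u : ℝ) (hub : β < u) :
    u * (u - β) * (Φ (x u) - Φ xstar)
     + (1 / 2) * ‖lam • (x u - xstar) + u • (x' u + β • gradient Φ (x u))‖ ^ 2
       ≤ energyE α β lam Φ xstar x x' u := by
  obtain ⟨hl1, hl2⟩ := hl
  unfold energyE
  have hu0 : 0 < u := by linarith
  have hG : 0 ≤ Φ (x u) - Φ xstar := by linarith [hmin (x u)]
  have h1 : 0 ≤ lam * (α - lam - 1) / 2 * ‖x u - xstar‖ ^ 2 := by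
    have : 0 ≤ α - lam - 1 := by linarith
    have : 0 ≤ lam := by linarith
    positivity
  have h3 : u * (u - β) * (Φ (x u) - Φ xstar)
      ≤ u * (u - β * (lam + 2 - α)) * (Φ (x u) - Φ xstar) := by
    apply mul_le_mul_of_nonneg_right _ hG
    apply mul_le_mul_of_nonneg_left _ hu0.le
    nlinarith
  linarith

lemma aux_rate (α β t₀ : ℝ) (hα : 3 ≤ α) (hβ : 0 < β) (ht₀ : 0 < t₀)
    (Φ : H → ℝ) (hconv : ConvexOn ℝ Set.univ Φ) (hΦ : ContDiff ℝ 2 Φ)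
    (xstar : H) (hmin : ∀ z, Φ xstar ≤ Φ z)
    (x x' x'' : ℝ → H) (hsol : IsDINAVDSolution α β t₀ Φ x x' x'')
    (lam : ℝ) (hl : lam ∈ Set.Icc 2 (α - 1)) (s t : ℝ) (hs : max t₀ β < s) (hst : s ≤ t) :
    Φ (x t) - Φ xstar ≤
        (1 / t ^ 2) * (s / (s - β)) ^ (α - 2) * energyE α β lam Φ xstar x x' s := by
  have hd := aux_decay α β t₀ hα hβ ht₀ Φ hconv hΦ xstar hmin x x' x'' hsol lam hl s t hs hst
  obtain ⟨hs1, hs2⟩ := max_lt_iff.1 hs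
  have hlow := aux_lower α β hβ Φ xstar hmin x x' lam hl t (by linarith)
  have ht0 : 0 < t := by linarith
  have htb : 0 < t - β := by linarith
  have hG : 0 ≤ Φ (x t) - Φ xstar := by linarith [hmin (x t)]
  have hv : 0 ≤ (1 / 2) * ‖lam • (x t - xstar) + t • (x' t + β • gradient Φ (x t))‖ ^ 2 := by
    positivity
  have hb : 1 ≤ t / (t - β) := by rw [one_le_div htb]; linarith
  have hw : t / (t - β) ≤ (t / (t - β)) ^ (α - 2) := by
    calc t / (t - β) = (t / (t - β)) ^ (1:ℝ) := (Real.rpow_one _).symm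
      _ ≤ _ := Real.rpow_le_rpow_of_exponent_le hb (by linarith)
  have key : t ^ 2 * (Φ (x t) - Φ xstar) ≤
      (s / (s - β)) ^ (α - 2) * energyE α β lam Φ xstar x x' s := by
    refine le_trans ?_ hd
    calc t ^ 2 * (Φ (x t) - Φ xstar)
        = t / (t - β) * (t * (t - β) * (Φ (x t) - Φ xstar)) := by field_simp
      _ ≤ (t / (t - β)) ^ (α - 2) * energyE α β lam Φ xstar x x' t := by
        apply mul_le_mul hw (by linarith) (by positivity) (by positivity)
  rw [mul_assoc, one_div, inv_mul_eq_div, le_div_iff₀ (by positivity)]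
  linarith

lemma aux_bdd (α β t₀ : ℝ) (hα : 3 ≤ α) (hβ : 0 < β) (ht₀ : 0 < t₀)
    (Φ : H → ℝ) (hconv : ConvexOn ℝ Set.univ Φ) (hΦ : ContDiff ℝ 2 Φ)
    (xstar : H) (hmin : ∀ z, Φ xstar ≤ Φ z)
    (x x' x'' : ℝ → H) (hsol : IsDINAVDSolution α β t₀ Φ x x' x'') :
    ∃ R : ℝ, ∀ t, t₀ ≤ t → ‖x t‖ ≤ R := by
  obtain ⟨s, hs⟩ : ∃ s, max t₀ β < s := exists_gt _
  obtain ⟨hs1, hs2⟩ := max_lt_iff.1 hs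
  have hl : (2:ℝ) ∈ Set.Icc 2 (α - 1) := ⟨le_rfl, by linarith⟩
  set K := (s / (s - β)) ^ (α - 2) * energyE α β 2 Φ xstar x x' s with hK
  have hvb : ∀ t, s ≤ t →
      ‖(2:ℝ) • (x t - xstar) + t • (x' t + β • gradient Φ (x t))‖ ^ 2 ≤ 2 * K := by
    intro t hst
    have hd := aux_decay α β t₀ hα hβ ht₀ Φ hconv hΦ xstar hmin x x' x'' hsol 2 hl s t hs hst
    have hlow := aux_lower α β hβ Φ xstar hmin x x' 2 hl t (by linarith)
    have ht0 : 0 < t := by linarith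
    have htb : 0 < t - β := by linarith
    have hG : 0 ≤ t * (t - β) * (Φ (x t) - Φ xstar) :=
      mul_nonneg (by positivity) (by linarith [hmin (x t)])
    have hb : 1 ≤ t / (t - β) := by rw [one_le_div htb]; linarith
    have hw : 1 ≤ (t / (t - β)) ^ (α - 2) := Real.one_le_rpow hb (by linarith)
    have hE : 0 ≤ energyE α β 2 Φ xstar x x' t := le_trans (by positivity) hlow
    have := le_mul_of_one_le_left hE hw
    linarith
  have hmono : ∀ t, s ≤ t → t ^ 2 * ‖x t - xstar‖ ^ 2 - K / 2 * t ^ 2 ≤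
      s ^ 2 * ‖x s - xstar‖ ^ 2 - K / 2 * s ^ 2 := by
    intro t hst
    refine aux_anti (fun t => t ^ 2 * ‖x t - xstar‖ ^ 2 - K / 2 * t ^ 2)
      (fun u => (2 * u) * ‖x u - xstar‖ ^ 2 + u ^ 2 * (2 * ⟪x u - xstar, x' u⟫)
        - K / 2 * (2 * u)) s ?_ ?_ t hst
    · intro u hu
      have h2 : HasDerivAt (fun u : ℝ => u ^ 2) (2 * u) u := by
        simpa using hasDerivAt_pow 2 u
      exact (h2.mul ((hsol.1 u (by simp; linarith)).sub_const xstar).norm_sq).sub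
        (h2.const_mul _)
    · intro u hu
      have hu0 : 0 < u := by linarith
      have hc := aux_conv Φ hconv (hΦ.differentiable (by norm_num)) (x u) xstar
      have hI : 0 ≤ ⟪gradient Φ (x u), x u - xstar⟫ := by linarith [hmin (x u)]
      have hv := hvb u hu
      set v := (2:ℝ) • (x u - xstar) + u • (x' u + β • gradient Φ (x u)) with hvdef
      have hvy : ⟪v, x u - xstar⟫ = 2 * ‖x u - xstar‖ ^ 2 + u * ⟪x u - xstar, x' u⟫
          + u * β * ⟪gradient Φ (x u), x u - xstar⟫ := by
        rw [hvdef, real_inner_comm (x' u) (x u - xstar)]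
        simp only [inner_add_left, inner_smul_left, real_inner_self_eq_norm_sq,
          RCLike.conj_to_real]
        ring
      have hcs := real_inner_le_norm v (x u - xstar)
      have h7 : 0 ≤ u * β * ⟪gradient Φ (x u), x u - xstar⟫ := by positivity
      have h8 : ‖x u - xstar‖ ^ 2 + u * ⟪x u - xstar, x' u⟫ - K / 2 ≤ 0 := by
        nlinarith [sq_nonneg (‖v‖ - 2 * ‖x u - xstar‖)]
      have h9 := mul_nonpos_of_nonneg_of_nonpos (by positivity : 0 ≤ 2 * u) h8
      linarith
  have hK0 : 0 ≤ K := by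
    have := hvb s le_rfl
    have h0 := sq_nonneg ‖(2:ℝ) • (x s - xstar) + s • (x' s + β • gradient Φ (x s))‖
    linarith
  have hlarge : ∀ t, s ≤ t → ‖x t - xstar‖ ^ 2 ≤ ‖x s - xstar‖ ^ 2 + K / 2 := by
    intro t hst
    have h := hmono t hst
    have hss : s ^ 2 ≤ t ^ 2 := by
      apply pow_le_pow_left₀ (by linarith) hst
    have hs0 : 0 ≤ K / 2 * s ^ 2 := by positivity
    have ht0 : 0 < t ^ 2 := by
      have : 0 < t := by linarith
      positivity
    have := mul_le_mul_of_nonneg_right hss (sq_nonneg ‖x s - xstar‖)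
    refine le_of_mul_le_mul_left ?_ ht0
    linarith
  have hcont : ContinuousOn x (Set.Icc t₀ s) := fun u hu =>
    (hsol.1 u hu.1).continuousAt.continuousWithinAt
  obtain ⟨C, hC⟩ := isCompact_Icc.exists_bound_of_continuousOn hcont
  refine ⟨max C (‖xstar‖ + √(‖x s - xstar‖ ^ 2 + K / 2)), fun t ht => ?_⟩
  rcases le_total t s with h | h
  · exact le_max_of_le_left (hC t ⟨ht, h⟩)
  · apply le_max_of_le_right
    have h1 := Real.le_sqrt_of_sq_le (hlarge t h)
    have h2 : ‖x t‖ ≤ ‖xstar‖ + ‖x t - xstar‖ := by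
      simpa using norm_add_le xstar (x t - xstar)
    linarith

theorem stmt6 (α β t₀ : ℝ) (hα : 3 ≤ α) (hβ : 0 < β) (ht₀ : 0 < t₀)
    (Φ : H → ℝ) (hconv : ConvexOn ℝ Set.univ Φ) (hΦ : ContDiff ℝ 2 Φ)
    (xstar : H) (hmin : ∀ z, Φ xstar ≤ Φ z)
    (x x' x'' : ℝ → H) (hsol : IsDINAVDSolution α β t₀ Φ x x' x'') :
    (∃ R : ℝ, ∀ t, t₀ ≤ t → ‖x t‖ ≤ R) ∧
    (∀ lam ∈ Set.Icc 2 (α - 1), ∀ s t : ℝ, max t₀ β < s → s ≤ t →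
      Φ (x t) - Φ xstar ≤
        (1 / t ^ 2) * (s / (s - β)) ^ (α - 2) * energyE α β lam Φ xstar x x' s) ∧
    (∃ C T : ℝ, ∀ t, T ≤ t → Φ (x t) - Φ xstar ≤ C / t ^ 2) := by
  have hrate := aux_rate α β t₀ hα hβ ht₀ Φ hconv hΦ xstar hmin x x' x'' hsol
  refine ⟨aux_bdd α β t₀ hα hβ ht₀ Φ hconv hΦ xstar hmin x x' x'' hsol, hrate, ?_⟩
  refine ⟨((max t₀ β + 1) / ((max t₀ β + 1) - β)) ^ (α - 2) *
    energyE α β 2 Φ xstar x x' (max t₀ β + 1), max t₀ β + 1, fun t ht => ?_⟩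
  have h := hrate 2 ⟨le_rfl, by linarith⟩ (max t₀ β + 1) t (lt_add_one _) ht
  refine h.trans (le_of_eq ?_)
  ring
end
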